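/- arXiv:2001.00284 — 2 statements merged into one kernel-verified Lean document; each statement's English description precedes it below -/
import Mathlib

section
/- Let C be a monoidal category that is preadditive with tensor product additive in each variable, and let (A, η) be a weak ring in C, i.e., η : 𝟙 ⟶ A is such that A ◁ η : A ⟶ A ⊗ A is a split monomorphism. If for some n ≥ 1 the n-fold tensor power η^{⊗n} : 𝟙^{⊗n} ⟶ A^{⊗n} is the zero morphism, then A is a zero object. -/
open CategoryTheory CategoryTheory.Limits CategoryTheory.MonoidalCategory

universe v u

variable {C : Type u} [Category.{v} C] [MonoidalCategory C]

/-- The `n`-fold tensor power of an object. -/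
def tpow (A : C) : ℕ → C
  | 0 => 𝟙_ C
  | n + 1 => A ⊗ tpow A n

/-- The `n`-fold tensor power of a morphism. -/
def tpowHom {A B : C} (f : A ⟶ B) : ∀ n : ℕ, tpow A n ⟶ tpow B n
  | 0 => 𝟙 _
  | n + 1 => f ⊗ₘ tpowHom f n

/-- A tensor power of the unit is isomorphic to the unit. -/
def tpowUnitIso : ∀ n : ℕ, tpow (𝟙_ C) n ≅ 𝟙_ C
  | 0 => Iso.refl _
  | n + 1 => λ_ (tpow (𝟙_ C) n) ≪≫ tpowUnitIso n

/-- Left whiskering preserves split monomorphisms. -/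
lemma isSplitMono_whiskerLeft (X : C) {Y Z : C} (f : Y ⟶ Z) [IsSplitMono f] :
    IsSplitMono (X ◁ f) :=
  inferInstanceAs (IsSplitMono ((tensorLeft X).map f))

/-- Right whiskering preserves split monomorphisms. -/
lemma isSplitMono_whiskerRight {Y Z : C} (f : Y ⟶ Z) [IsSplitMono f] (X : C) :
    IsSplitMono (f ▷ X) :=
  inferInstanceAs (IsSplitMono ((tensorRight X).map f))

/-- If `A ◁ η` is a split monomorphism, then so is `A ◁ (η ⊗ₘ f)` whenever `A ◁ f` is. -/
lemma isSplitMono_whiskerLeft_tensorHom {A B X Y : C} (η : B ⟶ A) (f : X ⟶ Y)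
    [IsSplitMono (A ◁ η)] [IsSplitMono (A ◁ f)] : IsSplitMono (A ◁ (η ⊗ₘ f)) := by
  have := isSplitMono_whiskerRight (A ◁ η) X
  have := isSplitMono_whiskerLeft A (A ◁ f)
  have key : A ◁ (η ⊗ₘ f) =
      (α_ A B X).inv ≫ (A ◁ η) ▷ X ≫ (α_ A A X).hom ≫ A ◁ A ◁ f := by
    simp [MonoidalCategory.tensorHom_def]
  rw [key]
  infer_instance

/-- If `A ◁ η` is a split monomorphism, then so is `A ◁ η^{⊗n}` for every `n`. -/
lemma isSplitMono_whiskerLeft_tpowHom {A B : C} (η : B ⟶ A) [IsSplitMono (A ◁ η)] :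
    ∀ n : ℕ, IsSplitMono (A ◁ tpowHom η n)
  | 0 => isSplitMono_whiskerLeft A (𝟙 _)
  | n + 1 =>
    have := isSplitMono_whiskerLeft_tpowHom η n
    isSplitMono_whiskerLeft_tensorHom η (tpowHom η n)

/-- If `(A, η)` is a weak ring (i.e. `A ◁ η` is a split monomorphism) in a preadditive
monoidal category with additive tensor, and the `n`-fold tensor power of `η` vanishes for
some `n ≥ 1`, then `A` is a zero object. -/
theorem weakRing_isZero_of_tpowHom_unit_eq_zero
    [Preadditive C] [MonoidalPreadditive C]
    (A : C) (η : 𝟙_ C ⟶ A) (h : IsSplitMono (A ◁ η))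
    (n : ℕ) (hn : 1 ≤ n) (hz : tpowHom η n = 0) :
    IsZero A := by
  have hs := isSplitMono_whiskerLeft_tpowHom η n
  rw [hz, MonoidalPreadditive.whiskerLeft_zero] at hs
  have hA : IsZero (A ⊗ tpow (𝟙_ C) n) := IsZero.of_mono_zero _ (A ⊗ tpow A n)
  exact hA.of_iso ((ρ_ A).symm ≪≫ whiskerLeftIso A (tpowUnitIso n).symm)
end

section
/- Let C and D be closed symmetric monoidal categories and let F : C ⥤ D be a strong symmetric monoidal functor with a right adjoint G : D ⥤ C that is fully faithful. Then for every object M of C and every object N of D there is an isomorphism F([M, G(N)]_C) ≅ [F(M), N]_D of internal-hom objects in D, natural in M and N. -/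
open CategoryTheory CategoryTheory.Limits CategoryTheory.MonoidalCategory

universe v₁ v₂ u₁ u₂

namespace CategoryTheory.Adjunction

variable {C : Type u₁} {D : Type u₂} [Category.{v₁} C] [Category.{v₂} D]
  [MonoidalCategory C] [MonoidalClosed C] [MonoidalCategory D] [MonoidalClosed D]
  {F : C ⥤ D} [F.Monoidal] {G : D ⥤ C} (adj : F ⊣ G)

/-- For a strong monoidal functor `F` with right adjoint `G`, the isomorphism
`[M, G N] ≅ G [F M, N]`, natural in `N`: it is conjugate to the tensorator
`F M ⊗ F T ≅ F (M ⊗ T)`. -/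
noncomputable def ihomRightAdjointIso (M : C) :
    G ⋙ ihom M ≅ ihom (F.obj M) ⋙ G :=
  conjugateIsoEquiv ((ihom.adjunction M).comp adj) (adj.comp (ihom.adjunction (F.obj M)))
    (Functor.Monoidal.commTensorLeft F M)

/-- The isomorphism `[M, G N] ≅ G [F M, N]` is natural in `M`. -/
lemma ihomRightAdjointIso_hom_naturality {M M' : C} (f : M' ⟶ M) :
    Functor.whiskerLeft G (MonoidalClosed.pre f) ≫ (adj.ihomRightAdjointIso M').hom =
      (adj.ihomRightAdjointIso M).hom ≫
        Functor.whiskerRight (MonoidalClosed.pre (F.map f)) G := by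
  simp only [MonoidalClosed.pre, ihomRightAdjointIso, conjugateIsoEquiv_apply_hom]
  rw [← conjugateEquiv_whiskerRight _ _ adj, ← conjugateEquiv_whiskerLeft _ _ adj,
    conjugateEquiv_comp, conjugateEquiv_comp]
  congr 1
  ext T
  exact (Functor.LaxMonoidal.μ_natural_left F f T).symm

end CategoryTheory.Adjunction

/-- If `F : C ⥤ D` is a strong symmetric monoidal functor between closed symmetric
monoidal categories, with a fully faithful right adjoint `G`, then there is an
isomorphism `F [M, G N]_C ≅ [F M, N]_D`, natural in `M` and `N`, expressed here as an
isomorphism of bifunctors `Cᵒᵖ ⥤ D ⥤ D`. -/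
theorem map_internalHom_rightAdjoint_iso
    {C : Type u₁} {D : Type u₂} [Category.{v₁} C] [Category.{v₂} D]
    [MonoidalCategory C] [SymmetricCategory C] [MonoidalClosed C]
    [MonoidalCategory D] [SymmetricCategory D] [MonoidalClosed D]
    (F : C ⥤ D) [F.Braided] (G : D ⥤ C) (adj : F ⊣ G) [G.Full] [G.Faithful] :
    Nonempty
      ((MonoidalClosed.internalHom (C := C) ⋙ (Functor.whiskeringLeft D C C).obj G ⋙
          (Functor.whiskeringRight D C D).obj F) ≅
        (F.op ⋙ MonoidalClosed.internalHom (C := D))) := by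
  let e (M : Cᵒᵖ) : G ⋙ ihom M.unop ⋙ F ≅ ihom (F.obj M.unop) :=
    Functor.isoWhiskerRight (adj.ihomRightAdjointIso M.unop) F ≪≫
      Functor.isoWhiskerLeft (ihom (F.obj M.unop)) (asIso adj.counit)
  refine ⟨NatIso.ofComponents e fun {M M'} f ↦ ?_⟩
  ext N
  have h := F.congr_map
    (NatTrans.congr_app (adj.ihomRightAdjointIso_hom_naturality f.unop) N)
  have h' := adj.counit.naturality ((MonoidalClosed.pre (F.map f.unop)).app N)
  simp only [F.map_comp, NatTrans.comp_app] at h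
  change F.map _ ≫ F.map _ ≫ _ = (F.map _ ≫ _) ≫ _
  exact (Category.assoc _ _ _).symm.trans <| (congrArg (· ≫ _) h).trans <|
    (Category.assoc _ _ _).trans <| (congrArg (_ ≫ ·) h').trans (Category.assoc _ _ _).symm
end
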